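/- arXiv:1612.07255 — 3 statements merged into one kernel-verified Lean document; each statement's English description precedes it below -/
import Mathlib

section
/- Let J be a finite index set and for each j ∈ J let A_j = A_j⁺ + A_j⁻ be complex n×n matrices with A_j⁺ Hermitian positive semidefinite and A_j⁻ Hermitian negative semidefinite, and let c_j ∈ ℝ. Fix s ≥ 0. If v, z ∈ ℂⁿ satisfy the slack-relaxed surrogate constraints g_j(v; z) ≤ c_j + s for all j ∈ J, then v also satisfies the re-linearized constraints around itself with the same slack: g_j(v; v) ≤ c_j + s for all j ∈ J. Consequently, the previous FPP iterate together with its slack is feasible for the next FPP subproblem, so the optimal slack value is nonincreasing along the FPP iterations. -/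
open Matrix
open scoped ComplexOrder

/-- A complex matrix is negative semidefinite if its negation is positive
semidefinite. -/
def Matrix.NegSemidef' {n : ℕ} (A : Matrix (Fin n) (Fin n) ℂ) : Prop :=
  (-A).PosSemidef

/-- The FPP-SCA surrogate `g(v; z)` of the quadratic `Re(vᴴ A v)` for the
decomposition `A = A⁺ + A⁻`. -/
noncomputable def surrogate {n : ℕ} (Ap An : Matrix (Fin n) (Fin n) ℂ)
    (z v : Fin n → ℂ) : ℝ :=
  (star v ⬝ᵥ (Ap *ᵥ v)).re + 2 * (star z ⬝ᵥ (An *ᵥ v)).re - (star z ⬝ᵥ (An *ᵥ z)).re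

/-- If `v, z` satisfy the slack-relaxed surrogate constraints
`g_j(v; z) ≤ c_j + s` for all `j` (with `s ≥ 0`), then `v` satisfies the
re-linearized constraints around itself with the same slack:
`g_j(v; v) ≤ c_j + s` for all `j`.  Hence the previous FPP iterate (with its
slack) is feasible for the next FPP subproblem and the optimal slack is
nonincreasing along the FPP iterations. -/
theorem stmt10 (n : ℕ) (J : Type*) [Fintype J]
    (A Ap An : J → Matrix (Fin n) (Fin n) ℂ) (c : J → ℝ)
    (hsum : ∀ j, A j = Ap j + An j)
    (hAp : ∀ j, (Ap j).PosSemidef) (hAn : ∀ j, (An j).NegSemidef')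
    (s : ℝ) (hs : 0 ≤ s) (v z : Fin n → ℂ)
    (hfeas : ∀ j, surrogate (Ap j) (An j) z v ≤ c j + s) :
    ∀ j, surrogate (Ap j) (An j) v v ≤ c j + s := by
  intro j
  refine le_trans ?_ (hfeas j)
  have hH : (An j).IsHermitian := by
    have h := (hAn j).isHermitian.neg
    rwa [neg_neg] at h
  have hpos : 0 ≤ (star (v - z) ⬝ᵥ ((-(An j)) *ᵥ (v - z))).re :=
    (Complex.le_def.1 ((hAn j).dotProduct_mulVec_nonneg (v - z))).1
  have hsymm : (star v ⬝ᵥ (An j *ᵥ z)).re = (star z ⬝ᵥ (An j *ᵥ v)).re := by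
    have h : star (star z ⬝ᵥ (An j *ᵥ v)) = star v ⬝ᵥ (An j *ᵥ z) := by
      rw [← star_dotProduct, star_mulVec, hH.eq, ← dotProduct_mulVec]
    rw [← h]
    simp
  simp only [star_sub, neg_mulVec, mulVec_sub, sub_dotProduct, dotProduct_sub,
    dotProduct_neg, Complex.sub_re, Complex.neg_re] at hpos
  unfold surrogate
  linarith
end

section
/- Let J be a finite index set and for each j ∈ J let A_j = A_j⁺ + A_j⁻ be complex n×n matrices with A_j⁺ Hermitian positive semidefinite and A_j⁻ Hermitian negative semidefinite, and let c_j ∈ ℝ. Let f : ℂⁿ → ℝ be any cost function. Suppose z ∈ ℂⁿ is feasible for the original constraints, i.e., Re(zᴴ A_j z) ≤ c_j for all j ∈ J, and suppose v minimizes f over the surrogate feasible set S(z) := { w ∈ ℂⁿ : g_j(w; z) ≤ c_j for all j ∈ J }. Then v is feasible for the original constraints (Re(vᴴ A_j v) ≤ c_j for all j ∈ J) and f(v) ≤ f(z). Hence the SCA iteration started from a feasible point produces feasible iterates with nonincreasing cost. -/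
open Matrix
open scoped ComplexOrder

/-- If `z` is feasible for the original constraints and `v`
minimizes the cost `f` over the surrogate feasible set
`S(z) := { w : g_j(w; z) ≤ c_j ∀ j }`, then `v` is feasible for the original
constraints and `f(v) ≤ f(z)`.  Hence the SCA iteration started from a
feasible point produces feasible iterates with nonincreasing cost. -/
theorem stmt14 (n : ℕ) (J : Type*) [Fintype J]
    (A Ap An : J → Matrix (Fin n) (Fin n) ℂ) (c : J → ℝ)
    (hsum : ∀ j, A j = Ap j + An j)
    (hAp : ∀ j, (Ap j).PosSemidef) (hAn : ∀ j, (An j).NegSemidef')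
    (f : (Fin n → ℂ) → ℝ) (z v : Fin n → ℂ)
    (hzfeas : ∀ j, (star z ⬝ᵥ ((A j) *ᵥ z)).re ≤ c j)
    (hvmem : ∀ j, surrogate (Ap j) (An j) z v ≤ c j)
    (hvmin : ∀ w : Fin n → ℂ, (∀ j, surrogate (Ap j) (An j) z w ≤ c j) → f v ≤ f w) :
    (∀ j, (star v ⬝ᵥ ((A j) *ᵥ v)).re ≤ c j) ∧ f v ≤ f z := by
  refine ⟨fun j => ?_, hvmin z fun j => ?_⟩
  · have hN : (-(An j)).PosSemidef := hAn j
    have hH : (An j)ᴴ = An j := by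
      have h := hN.isHermitian.eq
      rw [Matrix.conjTranspose_neg] at h
      exact neg_injective h
    have hcross : (star v ⬝ᵥ (An j *ᵥ z)).re = (star z ⬝ᵥ (An j *ᵥ v)).re := by
      have h : star (star z ⬝ᵥ (An j *ᵥ v)) = star v ⬝ᵥ (An j *ᵥ z) := by
        rw [Matrix.star_dotProduct, star_star, Matrix.star_mulVec, hH,
          ← Matrix.dotProduct_mulVec]
      rw [← h]
      simp
    have hpos := (Complex.le_def.mp (hN.dotProduct_mulVec_nonneg (v - z))).1
    have hm := hvmem j
    unfold surrogate at hm
    simp only [star_sub, Matrix.neg_mulVec, Matrix.mulVec_sub, dotProduct_neg, dotProduct_sub,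
      sub_dotProduct, Complex.neg_re, Complex.sub_re, Complex.zero_re] at hpos
    rw [hsum j, Matrix.add_mulVec, dotProduct_add, Complex.add_re]
    linarith
  · have h := hzfeas j
    rw [hsum j, Matrix.add_mulVec, dotProduct_add, Complex.add_re] at h
    unfold surrogate
    linarith
end

section
/- Let J be a finite index set and for each j ∈ J let A_j = A_j⁺ + A_j⁻ be complex n×n matrices with A_j⁺ Hermitian positive semidefinite and A_j⁻ Hermitian negative semidefinite, and let c_j ∈ ℝ. Fix z ∈ ℂⁿ. Suppose v ∈ ℂⁿ and s ≥ 0 satisfy g_j(v; z) ≤ c_j + s for all j ∈ J. Then the optimal slack of the FPP subproblem linearized at v is at most s: the infimum of { t : t ≥ 0 and there exists w ∈ ℂⁿ with g_j(w; v) ≤ c_j + t for all j ∈ J } is at most s. -/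
open Matrix
open scoped ComplexOrder

theorem re_symm_aux {n : ℕ} {B : Matrix (Fin n) (Fin n) ℂ} (hB : B.IsHermitian)
    (z v : Fin n → ℂ) : (star v ⬝ᵥ (B *ᵥ z)).re = (star z ⬝ᵥ (B *ᵥ v)).re := by
  have h : star v ⬝ᵥ (B *ᵥ z) = star (star z ⬝ᵥ (B *ᵥ v)) := by
    rw [star_dotProduct, star_mulVec, hB.eq, dotProduct_mulVec]
  rw [h]
  simp

/-- If `v` and `s ≥ 0` satisfy the slack-relaxed surrogate
constraints at `z`, i.e. `g_j(v; z) ≤ c_j + s` for all `j`, then the optimal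
slack of the FPP subproblem linearized at `v` is at most `s`:
`inf { t : t ≥ 0 ∧ ∃ w, ∀ j, g_j(w; v) ≤ c_j + t } ≤ s`. -/
theorem stmt15 (n : ℕ) (J : Type*) [Fintype J]
    (A Ap An : J → Matrix (Fin n) (Fin n) ℂ) (c : J → ℝ)
    (hsum : ∀ j, A j = Ap j + An j)
    (hAp : ∀ j, (Ap j).PosSemidef) (hAn : ∀ j, (An j).NegSemidef')
    (z v : Fin n → ℂ) (s : ℝ) (hs : 0 ≤ s)
    (hfeas : ∀ j, surrogate (Ap j) (An j) z v ≤ c j + s) :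
    sInf {t : ℝ | 0 ≤ t ∧ ∃ w : Fin n → ℂ,
      ∀ j, surrogate (Ap j) (An j) v w ≤ c j + t} ≤ s := by
  refine csInf_le ⟨0, fun t ht => ht.1⟩ ⟨hs, v, fun j => le_trans ?_ (hfeas j)⟩
  have hN : (-(An j)).PosSemidef := hAn j
  have hH : (An j).IsHermitian := by simpa using hN.1.neg
  have h1 := (Complex.le_def.mp (hN.dotProduct_mulVec_nonneg (v - z))).1
  have h2 := re_symm_aux hH z v
  simp only [neg_mulVec, mulVec_sub, star_sub, dotProduct_neg, sub_dotProduct, dotProduct_sub,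
    Complex.neg_re, Complex.sub_re, Complex.zero_re] at h1
  unfold surrogate
  linarith
end
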